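/- Let π be a weak unichain policy for 𝔅_n and let π' be its twin policy for 𝔇_n. Then for every vertex v of 𝔅_n, Val_{π,𝔅_n}(v) = Val_{π',𝔇_n}(v). -/

import Mathlib

/-! ## The Markov decision process `𝔅_n` -/

/-- Vertices of the MDP `𝔅_n`: a transportation vertex `t`, a sink `s`, a dummy vertex `d`,
and vertices `a i`, `b i` for `i ∈ {1,…,n}`. -/
inductive BV : Type where
  | t : BV
  | s : BV
  | d : BV
  | a : ℕ → BV
  | b : ℕ → BV
deriving DecidableEq

/-- The vertex `a i` for `i ∈ {1,…,n+1}`, with the convention `a (n+1) = s`. -/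
def aN (n i : ℕ) : BV := if i = n + 1 then BV.s else BV.a i

/-- The vertex `b i` for `i ∈ {1,…,n+1}`, with the convention `b (n+1) = d`. -/
def bN (n i : ℕ) : BV := if i = n + 1 then BV.d else BV.b i

/-- The vertex set of `𝔅_n`. -/
def IsBVertex (n : ℕ) : BV → Prop
  | BV.t => True
  | BV.s => True
  | BV.d => True
  | BV.a i => 1 ≤ i ∧ i ≤ n
  | BV.b i => 1 ≤ i ∧ i ≤ n

/-- The edge relation of `𝔅_n`: travel, enter, skip, board, stay, leave edges,
the edge `(d,s)` and the self-loop `(s,s)`. -/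
def BEdge (n : ℕ) (u v : BV) : Prop :=
  (∃ i, 1 ≤ i ∧ i ≤ n ∧ u = BV.t ∧ v = BV.a i) ∨
  (∃ i, 1 ≤ i ∧ i ≤ n ∧ u = BV.a i ∧ v = BV.b i) ∨
  (∃ i, 1 ≤ i ∧ i ≤ n ∧ u = BV.a i ∧ v = aN n (i + 1)) ∨
  (∃ i, 1 ≤ i ∧ i ≤ n ∧ u = BV.a i ∧ v = BV.t) ∨
  (∃ i, 1 ≤ i ∧ i ≤ n ∧ u = BV.b i ∧ v = bN n (i + 1)) ∨
  (∃ i, 1 ≤ i ∧ i ≤ n ∧ u = BV.b i ∧ v = aN n (i + 1)) ∨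
  (u = BV.d ∧ v = BV.s) ∨ (u = BV.s ∧ v = BV.s)

/-- The reward function of `𝔅_n`: `r(enter i) = 2^i`, `r(stay i) = 3/4`,
`r(board i) = -2^i + 5/4`, and reward `0` on all other edges. -/
def rB (n : ℕ) (u v : BV) : ℚ :=
  match u, v with
  | BV.a i, BV.b j => if i = j then 2 ^ i else 0
  | BV.a i, BV.t => -(2 ^ i) + 5 / 4
  | BV.b i, BV.b j => if j = i + 1 then 3 / 4 else 0
  | BV.b i, BV.d => if i = n then 3 / 4 else 0
  | _, _ => 0

/-- A policy for `𝔅_n` chooses an outgoing edge at every vertex. -/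
def IsBPolicy (n : ℕ) (π : BV → BV) : Prop := ∀ u, IsBVertex n u → BEdge n u (π u)

/-- A policy is weak unichain if it reaches the sink `s` from every vertex. -/
def BWeakUnichain (n : ℕ) (π : BV → BV) : Prop :=
  ∀ u, IsBVertex n u → ∃ k, π^[k] u = BV.s

open Classical in
/-- The value of a vertex `v` w.r.t. a (weak unichain) policy `π`:
the sum of the rewards along the path that `π` takes from `v` to the sink `s`. -/
noncomputable def BVal (n : ℕ) (π : BV → BV) (v : BV) : ℚ :=
  if h : ∃ k, π^[k] v = BV.s then
    ∑ i ∈ Finset.range (Nat.find h), rB n (π^[i] v) (π^[i + 1] v)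
  else 0

/-- The reduced costs of the edge `(u,v)` w.r.t. the policy `π`. -/
noncomputable def zB (n : ℕ) (π : BV → BV) (u v : BV) : ℚ :=
  rB n u v + BVal n π v - BVal n π u

/-- The edge `(u,v)` is an improving switch for `π` if its reduced costs are positive. -/
def BImproving (n : ℕ) (π : BV → BV) (u v : BV) : Prop :=
  BEdge n u v ∧ 0 < zB n π u v

/-- The Bland numbering `𝒩_{𝔅_n}` of the edges of `𝔅_n`. -/
def NB (n : ℕ) (u v : BV) : ℕ :=
  match u, v with
  | BV.t, BV.a i => i
  | BV.a i, BV.b _ => n + 1 + 5 * (i - 1)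
  | BV.a i, BV.a _ => n + 2 + 5 * (i - 1)
  | BV.a i, BV.s => n + 2 + 5 * (i - 1)
  | BV.a i, BV.t => n + 3 + 5 * (i - 1)
  | BV.b i, BV.b _ => n + 4 + 5 * (i - 1)
  | BV.b i, BV.d => n + 4 + 5 * (i - 1)
  | BV.b i, BV.a _ => n + 5 + 5 * (i - 1)
  | BV.b i, BV.s => n + 5 + 5 * (i - 1)
  | BV.d, BV.s => 6 * n + 1
  | BV.s, BV.s => 6 * n + 2
  | _, _ => 0

/-- One step of Bland's policy iteration with edge numbering `N`:
apply the improving switch with the smallest number. -/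
def IsBlandStep (n : ℕ) (N : BV → BV → ℕ) (π π' : BV → BV) : Prop :=
  ∃ u v, BImproving n π u v ∧ (∀ u' v', BImproving n π u' v' → N u v ≤ N u' v') ∧
    π' = Function.update π u v

/-- `BlandReaches n N π ψ` says that Bland's policy iteration started at `π` visits `ψ`. -/
def BlandReaches (n : ℕ) (N : BV → BV → ℕ) : (BV → BV) → (BV → BV) → Prop :=
  Relation.ReflTransGen (IsBlandStep n N)

/-- The canonical policy `π_0` for `0`: `travel 1`, `skip i` and `leave i` are active. -/
def pi0 (n : ℕ) : BV → BV := fun u =>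
  match u with
  | BV.t => BV.a 1
  | BV.a i => aN n (i + 1)
  | BV.b i => aN n (i + 1)
  | BV.d => BV.s
  | BV.s => BV.s

/-- The optimal policy `π_*`: `travel 1`, `enter i` for all `i`, `leave j` for `j < n`,
and `stay n` are active. -/
def piStar (n : ℕ) : BV → BV := fun u =>
  match u with
  | BV.t => BV.a 1
  | BV.a i => BV.b i
  | BV.b i => if i = n then BV.d else BV.a (i + 1)
  | BV.d => BV.s
  | BV.s => BV.s

/-! ## Bits and canonical policies -/

/-- The least significant set bit `ℓ_1(x)` (1-based). -/
noncomputable def lsb (x : ℕ) : ℕ := sInf {i | 1 ≤ i ∧ Nat.testBit x (i - 1)}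

/-- The most significant set bit `m(x)` (1-based). -/
noncomputable def msb1 (x : ℕ) : ℕ := sSup {i | 1 ≤ i ∧ Nat.testBit x (i - 1)}

/-- The least unset bit `ℓ_0(x)` (1-based). -/
noncomputable def lzero (x : ℕ) : ℕ := sInf {i | 1 ≤ i ∧ ¬ Nat.testBit x (i - 1)}

/-- `L_i(x) = max { j ≤ i-2 | x_j = 1 or j = 1 }` (1-based bits). -/
noncomputable def Lfun (i x : ℕ) : ℕ :=
  sSup {j | 1 ≤ j ∧ j ≤ i - 2 ∧ (Nat.testBit x (j - 1) ∨ j = 1)}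

/-- `IsCanonical n x π` says that `π` is the canonical policy `π_x` for `x`. -/
noncomputable def IsCanonical (n x : ℕ) (π : BV → BV) : Prop :=
  IsBPolicy n π ∧
  if x = 0 then
    π BV.t = BV.a 1 ∧
      ∀ i, 1 ≤ i → i ≤ n → π (BV.a i) = aN n (i + 1) ∧ π (BV.b i) = aN n (i + 1)
  else
    π BV.t = BV.a (lsb x) ∧
    π (BV.b (msb1 x)) = aN n (msb1 x + 1) ∧
    (∀ i, msb1 x < i → i ≤ n → π (BV.a i) = aN n (i + 1) ∧ π (BV.b i) = aN n (i + 1)) ∧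
    ∀ i, 1 ≤ i → i ≤ n → Nat.testBit x (i - 1) →
      π (BV.a i) = BV.b i ∧
      (i = 2 → π (BV.b 1) = BV.a 2 ∧ (¬ Nat.testBit x 0 → π (BV.a 1) = BV.a 2)) ∧
      (3 ≤ i → Nat.testBit x (i - 2) → π (BV.b (i - 1)) = BV.a i) ∧
      (3 ≤ i → ¬ Nat.testBit x (i - 2) →
        π (BV.b (i - 1)) = BV.b i ∧ π (BV.a (i - 1)) = BV.a i ∧
        π (BV.b (i - 2)) = BV.a (i - 1) ∧
        (Lfun i x < i - 2 →
          ∀ j, Lfun i x + 1 ≤ j → j ≤ i - 2 →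
            π (BV.a j) = BV.t ∧ π (BV.b (j - 1)) = BV.b j) ∧
        (Lfun i x = 1 → ¬ Nat.testBit x 0 → π (BV.a 1) = BV.t))

/-- Activating a list of edges in a policy, from left to right. -/
def activateList (π : BV → BV) (L : List (BV × BV)) : BV → BV :=
  L.foldl (fun σ e => Function.update σ e.1 e.2) π

/-- The canonical phases w.r.t. an odd number `x` (with `ℓ := ℓ_0(x)`), as a list of edges
to be activated in order. -/
noncomputable def phaseList (n x : ℕ) : List (BV × BV) :=
  let ℓ := lzero x
  (if Nat.testBit x ℓ then [(BV.b ℓ, aN n (ℓ + 1))] else []) ++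
  (if Nat.testBit x ℓ ∨ msb1 x < ℓ then [(BV.b (ℓ - 1), BV.b ℓ)] else []) ++
  [(BV.a ℓ, BV.b ℓ), (BV.t, BV.a ℓ)] ++
  ((List.range (ℓ - 2)).map fun j => (BV.a (j + 1), BV.t)) ++
  [(BV.a (ℓ - 1), BV.a ℓ)] ++
  (((List.range (ℓ - 3)).reverse).map fun j => (BV.b (j + 1), BV.b (j + 2))) ++
  (if ℓ = 2 then [(BV.b 1, BV.a 2)] else [])

/-! ## The Markov decision process `𝔇_n` -/

/-- Vertices of `𝔇_n`: the original vertices (`base`), and for every edge `(v,w)` of `𝔅_n`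
other than the self-loop, the gadget vertices `x v w`, `y v w`, `z v w`. -/
inductive DV : Type where
  | base : BV → DV
  | x : BV → BV → DV
  | y : BV → BV → DV
  | z : BV → BV → DV
deriving DecidableEq

/-- The edges of `𝔅_n` that get replaced by gadgets (all edges except the self-loop `(s,s)`). -/
def DEdgePair (n : ℕ) (v w : BV) : Prop := BEdge n v w ∧ v ≠ BV.s

/-- The vertex set of `𝔇_n`. -/
def IsDVertex (n : ℕ) : DV → Prop
  | DV.base v => IsBVertex n v
  | DV.x v w => DEdgePair n v w
  | DV.y v w => DEdgePair n v w
  | DV.z v w => DEdgePair n v w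

/-- The agent vertices of `𝔇_n` (all vertices except the randomization vertices `y v w`). -/
def IsDAgent (n : ℕ) : DV → Prop
  | DV.base v => IsBVertex n v
  | DV.x v w => DEdgePair n v w
  | DV.y _ _ => False
  | DV.z v w => DEdgePair n v w

/-- The agent edges of `𝔇_n`. -/
def DEdge (n : ℕ) (u u' : DV) : Prop :=
  (∃ v w, DEdgePair n v w ∧
    ((u = DV.base v ∧ u' = DV.x v w) ∨ (u = DV.x v w ∧ u' = DV.base v) ∨
     (u = DV.x v w ∧ u' = DV.y v w) ∨ (u = DV.z v w ∧ u' = DV.base w))) ∨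
  (u = DV.base BV.s ∧ u' = DV.base BV.s)

/-- The reward function of `𝔇_n`: the edge `(z v w, w)` carries the reward of the original
edge `(v,w)`; all other agent edges have reward `0`. -/
def rD (n : ℕ) (u u' : DV) : ℚ :=
  match u, u' with
  | DV.z v w, DV.base w' => if w' = w then rB n v w else 0
  | _, _ => 0

/-- A policy for `𝔇_n` chooses an outgoing agent edge at every agent vertex. -/
def IsDPolicy (n : ℕ) (π : DV → DV) : Prop := ∀ u, IsDAgent n u → DEdge n u (π u)

/-- `IsDVal n p π V` says that `V` satisfies the Bellman equations characterizing the value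
function of the policy `π` for `𝔇_n` with probabilities `p`, with `V s = 0`. -/
def IsDVal (n : ℕ) (p : BV → ℚ) (π : DV → DV) (V : DV → ℚ) : Prop :=
  V (DV.base BV.s) = 0 ∧
  (∀ u, IsDAgent n u → V u = rD n u (π u) + V (π u)) ∧
  (∀ v w, DEdgePair n v w →
    V (DV.y v w) = p v * V (DV.z v w) + (1 - p v) * V (DV.base v))

open Classical in
/-- The value function of a (weak unichain) policy `π` for `𝔇_n`: the unique solution of the
Bellman equations (normalized to `0` outside the vertex set). -/
noncomputable def DVal (n : ℕ) (p : BV → ℚ) (π : DV → DV) : DV → ℚ :=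
  if h : ∃! V : DV → ℚ, IsDVal n p π V ∧ ∀ u, ¬ IsDVertex n u → V u = 0 then
    h.exists.choose
  else fun _ => 0

/-- The reduced costs of an agent edge `(u,u')` of `𝔇_n` w.r.t. the policy `π`. -/
noncomputable def zD (n : ℕ) (p : BV → ℚ) (π : DV → DV) (u u' : DV) : ℚ :=
  rD n u u' + DVal n p π u' - DVal n p π u

/-- An agent edge of `𝔇_n` is an improving switch if its reduced costs are positive. -/
def DImproving (n : ℕ) (p : BV → ℚ) (π : DV → DV) (u u' : DV) : Prop :=
  DEdge n u u' ∧ 0 < zD n p π u u'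

/-- One (agent or positive-probability randomization) step of the process `𝔇_n` under `π`. -/
def DStep (n : ℕ) (p : BV → ℚ) (π : DV → DV) (u u' : DV) : Prop :=
  (IsDAgent n u ∧ u' = π u) ∨
  (∃ v w, DEdgePair n v w ∧ u = DV.y v w ∧
    ((u' = DV.z v w ∧ 0 < p v) ∨ (u' = DV.base v ∧ 0 < 1 - p v)))

/-- A policy for `𝔇_n` is weak unichain if it reaches `s` with probability one from every
vertex, i.e. `s` is reachable via active/positive-probability steps from every vertex. -/
def DWeakUnichain (n : ℕ) (p : BV → ℚ) (π : DV → DV) : Prop :=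
  ∀ u, IsDVertex n u → Relation.ReflTransGen (DStep n p π) u (DV.base BV.s)

/-- The twin policy of a policy `π` for `𝔅_n`: every vertex `v ≠ s` is `π v`-oriented. -/
def twin (π : BV → BV) : DV → DV := fun u =>
  match u with
  | DV.base v => if v = BV.s then DV.base BV.s else DV.x v (π v)
  | DV.x v w => if w = π v then DV.y v w else DV.base v
  | DV.y v w => DV.y v w
  | DV.z _ w => DV.base w

/-- The vertex numbering `𝒩_V` of `𝔅_n`: the order `(t, a 1, b 1, a 2, b 2, …, a n, b n, d, s)`. -/
def NV (n : ℕ) : BV → ℕ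
  | BV.t => 1
  | BV.a i => 2 * i
  | BV.b i => 2 * i + 1
  | BV.d => 2 * n + 2
  | BV.s => 2 * n + 3

/-- The specific probabilities `p_v = 2^{-𝒩_V(v)·(n+5)}`. -/
noncomputable def pSpec (n : ℕ) (v : BV) : ℚ := (2 : ℚ) ^ (-((NV n v * (n + 5) : ℕ) : ℤ))

/-- The set `B(v)` of agent edges of `𝔇_n` belonging to the vertex `v`. -/
def Belongs (n : ℕ) (v : BV) (e : DV × DV) : Prop :=
  ∃ w, DEdgePair n v w ∧
    (e = (DV.x v w, DV.y v w) ∨ e = (DV.base v, DV.x v w) ∨ e = (DV.x v w, DV.base v))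

/-- Applying the improving switch `e` to the policy `π` yields `π'`. -/
def DApply (n : ℕ) (p : BV → ℚ) (π : DV → DV) (e : DV × DV) (π' : DV → DV) : Prop :=
  DImproving n p π e.1 e.2 ∧ π' = Function.update π e.1 e.2

/-- One step of Bland's policy iteration on `𝔇_n` with edge numbering `N`. -/
def IsBlandStepD (n : ℕ) (p : BV → ℚ) (N : DV → DV → ℕ) (π π' : DV → DV) : Prop :=
  ∃ u u', DImproving n p π u u' ∧ (∀ a b, DImproving n p π a b → N u u' ≤ N a b) ∧
    π' = Function.update π u u'

/-- One step of Dantzig's policy iteration on `𝔇_n`: apply an improving switch of maximal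
reduced costs. -/
def DantzigStep (n : ℕ) (p : BV → ℚ) (π π' : DV → DV) : Prop :=
  ∃ u u', DImproving n p π u u' ∧
    (∀ a b, DImproving n p π a b → zD n p π a b ≤ zD n p π u u') ∧
    π' = Function.update π u u'

/-- The finite set of vertices of `𝔅_n`, as a `Finset`. -/
noncomputable def BVSet (n : ℕ) : Finset BV :=
  {BV.t, BV.d, BV.s} ∪ (Finset.Icc 1 n).image BV.a ∪ (Finset.Icc 1 n).image BV.b

/-- The finite set of agent vertices of `𝔇_n`, as a `Finset`. -/
noncomputable def DAgentSet (n : ℕ) : Finset DV := by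
  classical
  exact ((BVSet n).image DV.base) ∪
    (((BVSet n ×ˢ BVSet n).filter fun e => DEdgePair n e.1 e.2).image fun e => DV.x e.1 e.2) ∪
    (((BVSet n ×ˢ BVSet n).filter fun e => DEdgePair n e.1 e.2).image fun e => DV.z e.1 e.2)

/-- The objective of the Largest Increase rule: the sum of the values of all agent vertices. -/
noncomputable def LIobj (n : ℕ) (p : BV → ℚ) (π : DV → DV) : ℚ :=
  ∑ u ∈ DAgentSet n, DVal n p π u

/-- One step of the Largest Increase policy iteration on `𝔇_n`: apply an improving switch
maximizing the sum of all agent vertex values of the resulting policy. -/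
def LIStep (n : ℕ) (p : BV → ℚ) (π π' : DV → DV) : Prop :=
  ∃ u u', DImproving n p π u u' ∧
    (∀ a b, DImproving n p π a b →
      LIobj n p (Function.update π a b) ≤ LIobj n p (Function.update π u u')) ∧
    π' = Function.update π u u'

/-- `N` is a Bland numbering `𝒩_{𝔇_n}` for `𝔇_n`: it is injective on agent edges, the edges
`(x v w, v)` all come first, within each gadget `(x v w, y v w)` precedes `(v, x v w)`,
the gadget blocks are ordered according to `𝒩_{𝔅_n}`, and the self-loop comes last. -/
def IsDBlandNumbering (n : ℕ) (N : DV → DV → ℕ) : Prop :=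
  (∀ u₁ u₂ u₁' u₂', DEdge n u₁ u₂ → DEdge n u₁' u₂' → N u₁ u₂ = N u₁' u₂' →
    u₁ = u₁' ∧ u₂ = u₂') ∧
  (∀ v w v' w', DEdgePair n v w → DEdgePair n v' w' →
    N (DV.x v w) (DV.base v) < N (DV.x v' w') (DV.y v' w')) ∧
  (∀ v w, DEdgePair n v w → N (DV.x v w) (DV.y v w) < N (DV.base v) (DV.x v w)) ∧
  (∀ v w v' w', DEdgePair n v w → DEdgePair n v' w' → NB n v w < NB n v' w' →
    N (DV.base v) (DV.x v w) < N (DV.x v' w') (DV.y v' w')) ∧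
  (∀ v w, DEdgePair n v w → N (DV.base v) (DV.x v w) < N (DV.base BV.s) (DV.base BV.s))

/-!
A vertex `v ≠ s` that is `w`-oriented only moves through the gadget of `(v, w)`, in which it has
value `p_v (r(v, w) + Val(w)) + (1 - p_v) Val(v)`. Equating this with `Val(v)` and cancelling
`p_v ≠ 0` leaves `Val(v) = r(v, w) + Val(w)`. Hence the values of the twin policy on the original
vertices satisfy the recursion along the paths of `π` that determines `Val_π`. Extending `Val_π`
to the gadget vertices conversely solves the Bellman equations of the twin policy.
-/

section Graphs

variable {n : ℕ}

lemma isBVertex_aN_succ {i : ℕ} (hi : i ≤ n) : IsBVertex n (aN n (i + 1)) := by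
  unfold aN
  split_ifs
  · trivial
  · exact ⟨by omega, by omega⟩

lemma isBVertex_bN_succ {i : ℕ} (hi : i ≤ n) : IsBVertex n (bN n (i + 1)) := by
  unfold bN
  split_ifs
  · trivial
  · exact ⟨by omega, by omega⟩

lemma BEdge.isBVertex_left {u v : BV} (h : BEdge n u v) : IsBVertex n u := by
  rcases h with ⟨i, -, -, rfl, -⟩ | ⟨i, h₁, hn, rfl, -⟩ | ⟨i, h₁, hn, rfl, -⟩ |
    ⟨i, h₁, hn, rfl, -⟩ | ⟨i, h₁, hn, rfl, -⟩ | ⟨i, h₁, hn, rfl, -⟩ | ⟨rfl, -⟩ | ⟨rfl, -⟩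
  exacts [trivial, ⟨h₁, hn⟩, ⟨h₁, hn⟩, ⟨h₁, hn⟩, ⟨h₁, hn⟩, ⟨h₁, hn⟩, trivial, trivial]

lemma BEdge.isBVertex_right {u v : BV} (h : BEdge n u v) : IsBVertex n v := by
  rcases h with ⟨i, h₁, hn, -, rfl⟩ | ⟨i, h₁, hn, -, rfl⟩ | ⟨i, -, hn, -, rfl⟩ |
    ⟨i, -, -, -, rfl⟩ | ⟨i, -, hn, -, rfl⟩ | ⟨i, -, hn, -, rfl⟩ | ⟨-, rfl⟩ | ⟨-, rfl⟩
  exacts [⟨h₁, hn⟩, ⟨h₁, hn⟩, isBVertex_aN_succ hn, trivial, isBVertex_bN_succ hn,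
    isBVertex_aN_succ hn, trivial, trivial]

lemma IsDAgent.isDVertex {u : DV} (h : IsDAgent n u) : IsDVertex n u := by
  cases u with
  | base v | x v w | z v w => exact h
  | y v w => exact h.elim

lemma DEdge.isDVertex_right {u u' : DV} (h : DEdge n u u') : IsDVertex n u' := by
  rcases h with ⟨v, w, hvw, ⟨-, rfl⟩ | ⟨-, rfl⟩ | ⟨-, rfl⟩ | ⟨-, rfl⟩⟩ | ⟨-, rfl⟩
  exacts [hvw, hvw.1.isBVertex_left, hvw, hvw.1.isBVertex_right, trivial]

lemma isDPolicy_twin {π : BV → BV} (hπ : IsBPolicy n π) : IsDPolicy n (twin π) := by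
  intro u hu
  cases u with
  | base v =>
    by_cases hvs : v = BV.s
    · exact .inr (by simp [twin, hvs])
    · exact .inl ⟨v, π v, ⟨hπ v hu, hvs⟩, .inl (by simp [twin, hvs])⟩
  | x v w =>
    refine .inl ⟨v, w, hu, .inr ?_⟩
    by_cases hw : w = π v <;> simp [twin, hw]
  | y v w => exact hu.elim
  | z v w => exact .inl ⟨v, w, hu, by simp [twin]⟩

end Graphs

section PathValues

variable (n : ℕ) (π : BV → BV)

open Classical in
lemma BVal_s : BVal n π BV.s = 0 := by
  have h : ∃ k, π^[k] BV.s = BV.s := ⟨0, rfl⟩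
  rw [BVal, dif_pos h, (Nat.find_eq_zero h).2 rfl, Finset.sum_range_zero]

open Classical in
lemma BVal_eq_add {v : BV} (hvs : v ≠ BV.s) (h : ∃ k, π^[k] v = BV.s) :
    BVal n π v = rB n v (π v) + BVal n π (π v) := by
  have h' : ∃ k, π^[k] (π v) = BV.s := by
    obtain ⟨_ | k, hk⟩ := h
    · exact absurd hk hvs
    · exact ⟨k, hk⟩
  have hfind : Nat.find h = Nat.find h' + 1 := Nat.find_comp_succ h h' hvs
  rw [BVal, BVal, dif_pos h, dif_pos h', hfind, Finset.sum_range_succ', add_comm]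
  rfl

variable {n π}

lemma eq_BVal_of_recursion (hπ : IsBPolicy n π) (hwu : BWeakUnichain n π) {f : BV → ℚ}
    (hs : f BV.s = 0)
    (hf : ∀ v, IsBVertex n v → v ≠ BV.s → f v = rB n v (π v) + f (π v))
    {v : BV} (hv : IsBVertex n v) : f v = BVal n π v := by
  obtain ⟨k, hk⟩ := hwu v hv
  induction k generalizing v with
  | zero =>
    obtain rfl : v = BV.s := hk
    rw [hs, BVal_s]
  | succ k ih =>
    by_cases hvs : v = BV.s
    · rw [hvs, hs, BVal_s]
    · rw [hf v hv hvs, BVal_eq_add n π hvs (hwu v hv), ih (hπ v hv).isBVertex_right hk]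

end PathValues

section BellmanSolutions

variable {n : ℕ} {p : BV → ℚ} {σ : DV → DV} {V W : DV → ℚ}

lemma IsDVal.congr (hσ : IsDPolicy n σ) (hV : IsDVal n p σ V)
    (h : Set.EqOn V W {u | IsDVertex n u}) : IsDVal n p σ W := by
  obtain ⟨hsink, hagent, hrand⟩ := hV
  refine ⟨?_, fun u hu ↦ ?_, fun v w hvw ↦ ?_⟩
  · rw [← h (show IsDVertex n (.base .s) from trivial), hsink]
  · rw [← h hu.isDVertex, ← h (hσ u hu).isDVertex_right, hagent u hu]
  · have hv : IsDVertex n (.base v) := hvw.1.isBVertex_left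
    rw [← h (show IsDVertex n (.y v w) from hvw), ← h (show IsDVertex n (.z v w) from hvw),
      ← h hv, hrand v w hvw]

-- Solutions are arbitrary outside the vertex set, whereas `DVal` vanishes there.
lemma eqOn_DVal (hσ : IsDPolicy n σ) (hV : IsDVal n p σ V)
    (huniq : ∀ W, IsDVal n p σ W → Set.EqOn W V {u | IsDVertex n u}) :
    Set.EqOn (DVal n p σ) V {u | IsDVertex n u} := by
  let V₀ : DV → ℚ := Set.indicator {u | IsDVertex n u} V
  have hV₀ : Set.EqOn V₀ V {u | IsDVertex n u} := Set.eqOn_indicator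
  have hV₀_zero : ∀ u, ¬ IsDVertex n u → V₀ u = 0 := fun u ↦
    Set.indicator_of_notMem (s := {u | IsDVertex n u}) (a := u) (f := V)
  have hex : ∃! W : DV → ℚ, IsDVal n p σ W ∧ ∀ u, ¬ IsDVertex n u → W u = 0 := by
    refine ⟨V₀, ⟨hV.congr hσ hV₀.symm, hV₀_zero⟩, ?_⟩
    rintro W ⟨hW, hW_zero⟩
    funext u
    by_cases hu : IsDVertex n u
    · exact (huniq W hW hu).trans (hV₀ hu).symm
    · rw [hW_zero u hu, hV₀_zero u hu]
  rw [DVal, dif_pos hex]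
  exact huniq _ hex.exists.choose_spec.1

end BellmanSolutions

section TwinValues

variable {n : ℕ} {p : BV → ℚ} {π : BV → BV} {V : DV → ℚ} {v w : BV}

lemma IsDVal.z_eq (hV : IsDVal n p (twin π) V) (hvw : DEdgePair n v w) :
    V (.z v w) = rB n v w + V (.base w) := by
  simpa [twin, rD] using hV.2.1 (.z v w) hvw

lemma IsDVal.base_eq_x (hV : IsDVal n p (twin π) V) (hv : IsBVertex n v) (hvs : v ≠ BV.s) :
    V (.base v) = V (.x v (π v)) := by
  simpa [twin, rD, hvs] using hV.2.1 (.base v) hv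

lemma IsDVal.x_eq_y (hV : IsDVal n p (twin π) V) (hv : DEdgePair n v (π v)) :
    V (.x v (π v)) = V (.y v (π v)) := by
  simpa [twin, rD] using hV.2.1 (.x v (π v)) hv

lemma IsDVal.x_eq_base (hV : IsDVal n p (twin π) V) (hvw : DEdgePair n v w) :
    V (.x v w) = V (.base v) := by
  by_cases hw : w = π v
  · rw [hw, hV.base_eq_x hvw.1.isBVertex_left hvw.2]
  · simpa [twin, rD, hw] using hV.2.1 (.x v w) hvw

lemma IsDVal.base_eq_add (hV : IsDVal n p (twin π) V) (hv : DEdgePair n v (π v))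
    (hpv : p v ≠ 0) : V (.base v) = rB n v (π v) + V (.base (π v)) := by
  have hgadget : V (.base v) = p v * V (.z v (π v)) + (1 - p v) * V (.base v) :=
    calc V (.base v) = V (.x v (π v)) := hV.base_eq_x hv.1.isBVertex_left hv.2
      _ = V (.y v (π v)) := hV.x_eq_y hv
      _ = p v * V (.z v (π v)) + (1 - p v) * V (.base v) := hV.2.2 v (π v) hv
  have hcancel : p v * V (.base v) = p v * V (.z v (π v)) := by linarith
  rw [mul_left_cancel₀ hpv hcancel, hV.z_eq hv]

lemma IsDVal.base_eq_BVal (hp : ∀ v, IsBVertex n v → v ≠ BV.s → p v ≠ 0) (hπ : IsBPolicy n π)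
    (hwu : BWeakUnichain n π) (hV : IsDVal n p (twin π) V) (hv : IsBVertex n v) :
    V (.base v) = BVal n π v :=
  eq_BVal_of_recursion (f := fun u ↦ V (.base u)) hπ hwu hV.1
    (fun u hu hus ↦ hV.base_eq_add ⟨hπ u hu, hus⟩ (hp u hu hus)) hv

/-- The extension of the values `Val_π` from the vertices of `𝔅_n` to the gadget vertices of
`𝔇_n`, which turns out to be the value function of the twin policy of `π`. It is not normalized
to `0` outside the vertex set of `𝔇_n`. -/
noncomputable def twinVal (n : ℕ) (p : BV → ℚ) (π : BV → BV) : DV → ℚ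
  | .base v => BVal n π v
  | .x v _ => BVal n π v
  | .y v w => p v * (rB n v w + BVal n π w) + (1 - p v) * BVal n π v
  | .z v w => rB n v w + BVal n π w

lemma isDVal_twinVal (hwu : BWeakUnichain n π) :
    IsDVal n p (twin π) (twinVal n p π) := by
  refine ⟨BVal_s n π, fun u hu ↦ ?_, fun v w _ ↦ rfl⟩
  cases u with
  | base v => by_cases hvs : v = BV.s <;> simp [twin, rD, twinVal, hvs]
  | x v w =>
    by_cases hw : w = π v
    · have hstep := BVal_eq_add n π hu.2 (hwu v hu.1.isBVertex_left)
      simp only [twin, rD, twinVal, hw, if_true, ← hstep]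
      ring
    · simp [twin, rD, twinVal, hw]
  | y v w => exact hu.elim
  | z v w => simp [twin, rD, twinVal]

lemma IsDVal.eqOn_twinVal (hp : ∀ v, IsBVertex n v → v ≠ BV.s → p v ≠ 0) (hπ : IsBPolicy n π)
    (hwu : BWeakUnichain n π) (hV : IsDVal n p (twin π) V) :
    Set.EqOn V (twinVal n p π) {u | IsDVertex n u} := by
  have hbase : ∀ v, IsBVertex n v → V (.base v) = BVal n π v :=
    fun v hv ↦ hV.base_eq_BVal hp hπ hwu hv
  have hz : ∀ v w, DEdgePair n v w → V (.z v w) = rB n v w + BVal n π w := fun v w hvw ↦ by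
    rw [hV.z_eq hvw, hbase w hvw.1.isBVertex_right]
  intro u hu
  cases u with
  | base v => exact hbase v hu
  | x v w => exact (hV.x_eq_base hu).trans (hbase v hu.1.isBVertex_left)
  | y v w => rw [hV.2.2 v w hu, hz v w hu, hbase v hu.1.isBVertex_left, twinVal]
  | z v w => exact hz v w hu

lemma eqOn_DVal_twin (hp : ∀ v, IsBVertex n v → v ≠ BV.s → p v ≠ 0) (hπ : IsBPolicy n π)
    (hwu : BWeakUnichain n π) :
    Set.EqOn (DVal n p (twin π)) (twinVal n p π) {u | IsDVertex n u} :=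
  eqOn_DVal (isDPolicy_twin hπ) (isDVal_twinVal hwu) fun _ hW ↦ hW.eqOn_twinVal hp hπ hwu

end TwinValues

/-- Twin policies have the same vertex values: for a weak unichain policy `π` for `𝔅_n`
with twin policy `π'` for `𝔇_n`, `Val_{π,𝔅_n}(v) = Val_{π',𝔇_n}(v)` for every vertex `v`. -/
theorem stmt9 (n : ℕ) (hn : 1 ≤ n) (p : BV → ℚ)
    (hp : ∀ v, IsBVertex n v → v ≠ BV.s → 0 < p v ∧ p v ≤ 1)
    (π : BV → BV) (hπ : IsBPolicy n π) (hwu : BWeakUnichain n π)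
    (v : BV) (hv : IsBVertex n v) :
    DVal n p (twin π) (DV.base v) = BVal n π v := by
  have hp_ne : ∀ u, IsBVertex n u → u ≠ BV.s → p u ≠ 0 := fun u hu hus ↦ (hp u hu hus).1.ne'
  have hbase : IsDVertex n (.base v) := hv
  exact eqOn_DVal_twin hp_ne hπ hwu hbase
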